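/- If V is a ℋ-submodule of M(α) with |α| = n whose first nonzero degree is d, then for all m ≥ d, dim V_m ≥ C(m − d + n, n); consequently dim V_m, which is also bounded above by C(m, n), is eventually a polynomial of degree n in m with leading coefficient 1/n!. -/

import Mathlib

/-- The data of a sequence of `H_m(0)`-modules with transition maps: a `k`-vector
space `V m` for each `m`, operators `T m i` (the action of the 0-Hecke generator
`π_i ∈ H_m(0)`, meaningful for `1 ≤ i ≤ m - 1`), and `H_m(0)`-equivariant transition
maps `φ m : V m → V (m+1)`. -/
structure HSeq (k : Type) [Field k] where
  V : ℕ → Type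
  [acg : ∀ m, AddCommGroup (V m)]
  [mod : ∀ m, Module k (V m)]
  T : ∀ m, ℕ → V m →ₗ[k] V m
  φ : ∀ m, V m →ₗ[k] V (m + 1)

attribute [instance] HSeq.acg HSeq.mod

variable {k : Type} [Field k]

/-- The composite transition map `V n → V m` for `n ≤ m`. -/
def HSeq.transit (X : HSeq k) {n m : ℕ} (h : n ≤ m) (v : X.V n) : X.V m :=
  Nat.leRecOn h (fun {j} w => X.φ j w) v

/-- `X` is a `ℋ`-module: the `T m i` satisfy the 0-Hecke relations, the transition
maps are equivariant, and (the `ℋ`-module criterion) every element in the image of a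
composite transition map `V n → V m` is fixed by `π_j` for `n + 1 ≤ j ≤ m - 1`. -/
def HSeq.IsHModule (X : HSeq k) : Prop :=
  (∀ m i, 1 ≤ i → i + 1 ≤ m → (X.T m i).comp (X.T m i) = X.T m i) ∧
  (∀ m i, 1 ≤ i → i + 2 ≤ m →
    (X.T m i).comp ((X.T m (i + 1)).comp (X.T m i)) =
      (X.T m (i + 1)).comp ((X.T m i).comp (X.T m (i + 1)))) ∧
  (∀ m i j, 1 ≤ i → i + 1 < j → j + 1 ≤ m →
    (X.T m i).comp (X.T m j) = (X.T m j).comp (X.T m i)) ∧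
  (∀ m i, 1 ≤ i → i + 1 ≤ m → (X.T (m + 1) i).comp (X.φ m) = (X.φ m).comp (X.T m i)) ∧
  (∀ n m (h : n ≤ m) j, n + 1 ≤ j → j + 1 ≤ m →
    ∀ v : X.V n, X.T m j (X.transit h v) = X.transit h v)

/-- A `ℋ`-submodule of `X`: a family of subspaces closed under the 0-Hecke operators
and the transition maps. -/
def HSeq.IsSub (X : HSeq k) (W : ∀ m, Submodule k (X.V m)) : Prop :=
  (∀ m i, 1 ≤ i → i + 1 ≤ m → ∀ v ∈ W m, X.T m i v ∈ W m) ∧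
  (∀ m, ∀ v ∈ W m, X.φ m v ∈ W (m + 1))

/-- The descent set `D(α)` of a composition `α`. -/
def compDescents {n : ℕ} (α : Composition n) : Finset ℕ :=
  (Finset.range (α.length - 1)).image fun i => (α.blocks.take (i + 1)).sum

/-- `X`, with generator `v ∈ X.V n`, is the induced `ℋ`-module `M(α)` for `α ⊨ n`:
`X` is a `ℋ`-module, `H_n(0)` acts on `v` through the simple module `C_α`, and `(X, v)`
satisfies the universal property of the induced module: for any `ℋ`-module `Y` and
vector `w ∈ Y.V n` on which `H_n(0)` acts through `C_α`, there is a unique morphism of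
`ℋ`-modules `X → Y` sending `v` to `w`. -/
def IsInducedModule (n : ℕ) (α : Composition n) (X : HSeq k) (v : X.V n) : Prop :=
  X.IsHModule ∧
  (∀ i, 1 ≤ i → i + 1 ≤ n →
    X.T n i v = (if i ∈ compDescents α then (0 : k) else 1) • v) ∧
  ∀ (Y : HSeq k), Y.IsHModule → ∀ w : Y.V n,
    (∀ i, 1 ≤ i → i + 1 ≤ n →
      Y.T n i w = (if i ∈ compDescents α then (0 : k) else 1) • w) →
    ∃! f : ∀ m, X.V m →ₗ[k] Y.V m,
      f n v = w ∧
      (∀ m i, 1 ≤ i → i + 1 ≤ m → (Y.T m i).comp (f m) = (f m).comp (X.T m i)) ∧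
      (∀ m, (Y.φ m).comp (f m) = (f (m + 1)).comp (X.φ m))

/-! ### Counting lattice points in up-closed sets -/

open Finset in
lemma card_tuples (n D : ℕ) :
    #(Finset.Nat.antidiagonalTuple (n + 1) D) = (D + n).choose n := by
  have e := Sym.equivNatSumOfFintype (Fin (n + 1)) D
  have h1 : Nat.card {P : Fin (n + 1) → ℕ // ∑ i, P i = D}
      = #(Finset.Nat.antidiagonalTuple (n + 1) D) := by
    rw [← Nat.card_eq_finsetCard]
    exact Nat.card_congr (Equiv.subtypeEquivRight fun x => by
      simp [Finset.Nat.mem_antidiagonalTuple])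
  rw [← h1, ← Nat.card_congr e, Nat.card_eq_fintype_card, Sym.card_sym_eq_choose]
  simp only [Fintype.card_fin]
  rw [show n + 1 + D - 1 = D + n by omega]
  rw [← Nat.choose_symm_add]

noncomputable def binPoly (n : ℕ) : Polynomial ℚ :=
  Polynomial.C (1 / (n.factorial : ℚ)) * descPochhammer ℚ n

lemma binPoly_eval (n N : ℕ) : (binPoly n).eval (N : ℚ) = (N.choose n : ℚ) := by
  have h := Nat.descFactorial_eq_factorial_mul_choose N n
  have hf : (n.factorial : ℚ) ≠ 0 := by exact_mod_cast n.factorial_ne_zero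
  rw [binPoly, Polynomial.eval_mul, Polynomial.eval_C,
    descPochhammer_eval_eq_descFactorial ℚ N n, h]
  push_cast
  field_simp

lemma binPoly_leadingCoeff (n : ℕ) : (binPoly n).leadingCoeff = 1 / (n.factorial : ℚ) := by
  rw [binPoly, Polynomial.leadingCoeff_mul, Polynomial.leadingCoeff_C,
    (monic_descPochhammer ℚ n).leadingCoeff, mul_one]

lemma binPoly_natDegree (n : ℕ) : (binPoly n).natDegree = n := by
  have hf : (1 / (n.factorial : ℚ)) ≠ 0 := by
    have : (n.factorial : ℚ) ≠ 0 := by exact_mod_cast n.factorial_ne_zero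
    positivity
  rw [binPoly, Polynomial.natDegree_C_mul hf, descPochhammer_natDegree]

open Polynomial Filter Topology in
lemma poly_squeeze (n d : ℕ) (p : Polynomial ℚ) (N : ℕ)
    (h1 : ∀ m, N ≤ m → d ≤ m → ((m - d + n).choose n : ℚ) ≤ p.eval (m : ℚ))
    (h2 : ∀ m, N ≤ m → d ≤ m → p.eval (m : ℚ) ≤ (m.choose n : ℚ)) :
    p.natDegree = n ∧ p.leadingCoeff = 1 / (n.factorial : ℚ) := by
  set Q := binPoly n with hQ
  have hlc : Q.leadingCoeff = 1 / (n.factorial : ℚ) := binPoly_leadingCoeff n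
  have hQ0 : Q ≠ 0 := by
    rw [← leadingCoeff_ne_zero, hlc]
    have : (n.factorial : ℚ) ≠ 0 := by exact_mod_cast n.factorial_ne_zero
    positivity
  set Q2 := Q.comp (X + C ((n : ℚ) - d)) with hQ2
  have hQ2e : ∀ m, d ≤ m → Q2.eval (m : ℚ) = ((m - d + n).choose n : ℚ) := by
    intro m hm
    rw [hQ2, eval_comp, ← binPoly_eval]
    congr 1
    push_cast [Nat.cast_sub hm]
    simp
    ring
  have hdeg : Q.degree = Q2.degree := by
    have hq2n : Q2.natDegree = Q.natDegree := by
      rw [hQ2, natDegree_comp, natDegree_X_add_C, mul_one]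
    have hq20 : Q2 ≠ 0 := by
      intro h
      rw [← leadingCoeff_eq_zero, hQ2, leadingCoeff_comp (by rw [natDegree_X_add_C]; simp), leadingCoeff_X_add_C] at h
      simp [hQ0] at h
    rw [degree_eq_natDegree hQ0, degree_eq_natDegree hq20, hq2n]
  have hlc2 : Q.leadingCoeff = Q2.leadingCoeff := by
    rw [hQ2, leadingCoeff_comp (by rw [natDegree_X_add_C]; simp), leadingCoeff_X_add_C]; simp
  have hS : (Q - Q2).degree < Q.degree := degree_sub_lt_left hdeg hQ0 hlc2
  have hR : (Q - p).degree ≤ (Q - Q2).degree := by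
    by_contra hlt
    push Not at hlt
    have ht := (div_tendsto_atTop_zero_of_degree_lt (Q - Q2) (Q - p) hlt).comp
      (tendsto_natCast_atTop_atTop (R := ℚ))
    have hR0 : Q - p ≠ 0 := by
      intro h; rw [h] at hlt; simp at hlt
    have hne := (tendsto_natCast_atTop_atTop (R := ℚ)).eventually
      (eventually_atTop_not_isRoot (Q - p) hR0)
    have hsm := ht.eventually (gt_mem_nhds (show (0 : ℚ) < 1 by norm_num))
    obtain ⟨m, hm1, hm2, hm3⟩ := (hne.and (hsm.and (eventually_ge_atTop (max N d)))).exists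
    have a1 := h1 m (le_trans (le_max_left _ _) hm3) (le_trans (le_max_right _ _) hm3)
    have a2 := h2 m (le_trans (le_max_left _ _) hm3) (le_trans (le_max_right _ _) hm3)
    rw [← hQ2e m (le_trans (le_max_right _ _) hm3)] at a1
    rw [← binPoly_eval, ← hQ] at a2
    simp only [Function.comp, IsRoot.def, eval_sub] at hm1 hm2
    have hpos : 0 < eval (m : ℚ) Q - eval (m : ℚ) p :=
      lt_of_le_of_ne (by linarith) (Ne.symm hm1)
    rw [div_lt_one hpos] at hm2
    linarith
  have hp : p = Q - (Q - p) := by ring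
  have hlt := lt_of_le_of_lt hR hS
  constructor
  · rw [hp, natDegree_eq_of_degree_eq (degree_sub_eq_left_of_degree_lt hlt), binPoly_natDegree]
  · rw [hp, leadingCoeff_sub_of_degree_lt hlt, hlc]

open scoped Classical in
/-- Number of tuples of total degree `D` above some element of `G`. -/
noncomputable def upCount (n : ℕ) (G : Finset (Fin (n + 1) → ℕ)) (D : ℕ) : ℕ :=
  ((Finset.Nat.antidiagonalTuple (n + 1) D).filter fun x => ∃ g ∈ G, g ≤ x).card

open Finset in
open scoped Classical in
lemma principal_count (n : ℕ) (b : Fin (n + 1) → ℕ) (D : ℕ) (hD : ∑ i, b i ≤ D) :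
    #((Finset.Nat.antidiagonalTuple (n + 1) D).filter fun x => b ≤ x)
      = (D - ∑ i, b i + n).choose n := by
  rw [← card_tuples]
  refine (Finset.card_bij (fun x _ => b + x) ?_ ?_ ?_).symm
  · intro x hx
    simp only [Finset.Nat.mem_antidiagonalTuple, mem_filter] at hx ⊢
    refine ⟨?_, le_self_add⟩
    simp only [Pi.add_apply, Finset.sum_add_distrib, hx]
    omega
  · intro x _ y _ h
    exact add_left_cancel h
  · intro y hy
    simp only [Finset.Nat.mem_antidiagonalTuple, mem_filter] at hy
    refine ⟨y - b, ?_, add_tsub_cancel_of_le hy.2⟩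
    simp only [Finset.Nat.mem_antidiagonalTuple]
    have : ∑ i, (b + (y - b)) i = D := by rw [add_tsub_cancel_of_le hy.2]; exact hy.1
    simp only [Pi.add_apply, Finset.sum_add_distrib] at this
    omega

open Finset in
open scoped Classical in
lemma upCount_poly (n : ℕ) : ∀ (r : ℕ) (G : Finset (Fin (n + 1) → ℕ)), #G ≤ r →
    ∃ p : Polynomial ℚ, ∃ N, ∀ D, N ≤ D → (upCount n G D : ℚ) = p.eval (D : ℚ) := by
  intro r
  induction r with
  | zero =>
    intro G hG
    have : G = ∅ := by simpa using hG
    subst this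
    exact ⟨0, 0, fun D _ => by simp [upCount]⟩
  | succ r ih =>
    intro G hG
    rcases G.eq_empty_or_nonempty with rfl | ⟨b, hb⟩
    · exact ih _ (by simp)
    have hc : #(G.erase b) ≤ r := by rw [card_erase_of_mem hb]; omega
    obtain ⟨p1, N1, h1⟩ := ih (G.erase b) hc
    obtain ⟨p2, N2, h2⟩ := ih ((G.erase b).image fun g => g ⊔ b) (card_image_le.trans hc)
    refine ⟨p1 + (binPoly n).comp (Polynomial.X + Polynomial.C ((n : ℚ) - ∑ i, (b i : ℚ))) - p2,
      max (max N1 N2) (∑ i, b i), fun D hD => ?_⟩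
    have hD1 : N1 ≤ D := by omega
    have hD2 : N2 ≤ D := by omega
    have hD3 : ∑ i, b i ≤ D := by omega
    rw [Polynomial.eval_sub, Polynomial.eval_add, ← h1 D hD1, ← h2 D hD2, Polynomial.eval_comp]
    have e : Polynomial.eval (D : ℚ) (Polynomial.X + Polynomial.C ((n : ℚ) - ∑ i, (b i : ℚ)))
        = ((D - ∑ i, b i + n : ℕ) : ℚ) := by
      rw [Polynomial.eval_add, Polynomial.eval_X, Polynomial.eval_C]
      push_cast [Nat.cast_sub hD3]
      ring
    rw [e, binPoly_eval, ← principal_count n b D hD3]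
    have key := card_union_add_card_inter
      ((Finset.Nat.antidiagonalTuple (n + 1) D).filter fun x => ∃ g ∈ G.erase b, g ≤ x)
      ((Finset.Nat.antidiagonalTuple (n + 1) D).filter fun x => b ≤ x)
    rw [← filter_or, ← filter_and] at key
    have e1 : ((Finset.Nat.antidiagonalTuple (n + 1) D).filter
        fun x => (∃ g ∈ G.erase b, g ≤ x) ∨ b ≤ x)
        = (Finset.Nat.antidiagonalTuple (n + 1) D).filter fun x => ∃ g ∈ G, g ≤ x := by
      apply filter_congr
      intro x _
      constructor
      · rintro (⟨g, hg, h⟩ | h)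
        · exact ⟨g, mem_of_mem_erase hg, h⟩
        · exact ⟨b, hb, h⟩
      · rintro ⟨g, hg, h⟩
        by_cases hgb : g = b
        · subst hgb; exact Or.inr h
        · exact Or.inl ⟨g, mem_erase.2 ⟨hgb, hg⟩, h⟩
    have e2 : ((Finset.Nat.antidiagonalTuple (n + 1) D).filter
        fun x => (∃ g ∈ G.erase b, g ≤ x) ∧ b ≤ x)
        = (Finset.Nat.antidiagonalTuple (n + 1) D).filter
          fun x => ∃ g ∈ (G.erase b).image (fun g => g ⊔ b), g ≤ x := by
      apply filter_congr
      intro x _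
      constructor
      · rintro ⟨⟨g, hg, h⟩, h'⟩
        exact ⟨g ⊔ b, mem_image_of_mem _ hg, sup_le h h'⟩
      · rintro ⟨g, hg, h⟩
        obtain ⟨g', hg', rfl⟩ := mem_image.1 hg
        exact ⟨⟨g', hg', le_sup_left.trans h⟩, le_sup_right.trans h⟩
    rw [e1, e2] at key
    unfold upCount
    rw [eq_sub_iff_add_eq]
    exact_mod_cast key

open Finset in
open scoped Classical in
/-- The counting function of an upper set in `ℕ^(n+1)`. -/
lemma upperSet_count (n : ℕ) (U : Set (Fin (n + 1) → ℕ))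
    (hU : ∀ x y, x ≤ y → x ∈ U → y ∈ U) :
    (∃ p : Polynomial ℚ, ∃ N, ∀ D, N ≤ D →
      (#((Finset.Nat.antidiagonalTuple (n + 1) D).filter (· ∈ U)) : ℚ) = p.eval (D : ℚ)) ∧
    (∀ b ∈ U, ∀ D, ∑ i, b i ≤ D → (D - ∑ i, b i + n).choose n ≤
      #((Finset.Nat.antidiagonalTuple (n + 1) D).filter (· ∈ U))) := by
  constructor
  · have hfin : {x | Minimal (· ∈ U) x}.Finite :=
      WellQuasiOrderedLE.finite_of_isAntichain (setOfPred_minimal_antichain _)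
    obtain ⟨p, N, h⟩ := upCount_poly n _ hfin.toFinset le_rfl
    refine ⟨p, N, fun D hD => ?_⟩
    rw [← h D hD, upCount]
    congr 2
    apply filter_congr
    intro x _
    constructor
    · intro hx
      obtain ⟨b, hb, hm⟩ := (Set.isPWO_of_wellQuasiOrderedLE U).exists_le_minimal hx
      exact ⟨b, by simpa using hm, hb⟩
    · rintro ⟨g, hg, h⟩
      have : Minimal (· ∈ U) g := by simpa using hg
      exact hU _ _ h this.prop
  · intro b hb D hD
    rw [← principal_count n b D hD]
    apply card_le_card
    intro x hx
    simp only [mem_filter] at hx ⊢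
    exact ⟨hx.1, hU _ _ hx.2 hb⟩
/-! ### Gap vectors and subsets -/

def gapExt {n : ℕ} (a : Fin (n + 1) → ℕ) (i : ℕ) : ℕ := if h : i < n + 1 then a ⟨i, h⟩ else 0

def gapSum {n : ℕ} (a : Fin (n + 1) → ℕ) (j : ℕ) : ℕ := ∑ i ∈ Finset.range j, gapExt a i

lemma gapSum_total {n : ℕ} (a : Fin (n + 1) → ℕ) : gapSum a (n + 1) = ∑ i, a i := by
  rw [gapSum, Finset.sum_range]
  exact Finset.sum_congr rfl fun i _ => by rw [gapExt, dif_pos i.2]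

lemma gapSum_mono {n : ℕ} (a : Fin (n + 1) → ℕ) : Monotone (gapSum a) := by
  intro i j h
  exact Finset.sum_le_sum_of_subset (Finset.range_subset_range.2 h)

def gapPos {n : ℕ} (a : Fin (n + 1) → ℕ) (j : ℕ) : ℕ := gapSum a (j + 1) + j + 1

lemma gapPos_strictMono {n : ℕ} (a : Fin (n + 1) → ℕ) : StrictMono (gapPos a) := by
  intro i j h
  have := gapSum_mono a (show i + 1 ≤ j + 1 by omega)
  unfold gapPos
  omega

def gapSet {n : ℕ} (a : Fin (n + 1) → ℕ) : Finset ℕ := (Finset.range n).image (gapPos a)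

lemma gapSet_card {n : ℕ} (a : Fin (n + 1) → ℕ) : (gapSet a).card = n := by
  rw [gapSet, Finset.card_image_of_injective _ (gapPos_strictMono a).injective, Finset.card_range]

lemma gapSet_mem {n : ℕ} (a : Fin (n + 1) → ℕ) (m : ℕ) (hm : m = ∑ i, a i + n) :
    gapSet a ∈ Finset.powersetCard n (Finset.Icc 1 m) := by
  rw [Finset.mem_powersetCard]
  refine ⟨?_, gapSet_card a⟩
  intro x hx
  obtain ⟨j, hj, rfl⟩ := Finset.mem_image.1 hx
  rw [Finset.mem_range] at hj
  have := gapSum_mono a (show j + 1 ≤ n + 1 by omega)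
  rw [gapSum_total] at this
  rw [Finset.mem_Icc]
  unfold gapPos
  omega

lemma gapSet_inj {n : ℕ} (a b : Fin (n + 1) → ℕ) (hs : ∑ i, a i = ∑ i, b i)
    (h : gapSet a = gapSet b) : a = b := by
  have ha := Finset.orderEmbOfFin_unique (gapSet_card a) (f := fun j : Fin n => gapPos a j)
    (fun j => Finset.mem_image_of_mem _ (Finset.mem_range.2 j.2))
    (fun i j hij => gapPos_strictMono a hij)
  have hb := Finset.orderEmbOfFin_unique (gapSet_card a) (f := fun j : Fin n => gapPos b j)
    (fun j => by rw [h]; exact Finset.mem_image_of_mem _ (Finset.mem_range.2 j.2))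
    (fun i j hij => gapPos_strictMono b hij)
  have hab := ha.trans hb.symm
  have hsum : ∀ j, j ≤ n + 1 → gapSum a j = gapSum b j := by
    intro j hj
    rcases j with _ | j
    · simp [gapSum]
    rcases Nat.lt_or_ge j n with hlt | hge
    · have := congrFun hab ⟨j, hlt⟩
      simp only [gapPos] at this
      omega
    · have : j = n := by omega
      subst this
      rw [gapSum_total, gapSum_total, hs]
  funext i
  have h1 := hsum i (by omega)
  have h2 := hsum (i + 1) (by omega)
  unfold gapSum at h1 h2
  rw [Finset.sum_range_succ, Finset.sum_range_succ, h1] at h2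
  have h3 := Nat.add_left_cancel h2
  rwa [gapExt, gapExt, dif_pos i.2, dif_pos i.2] at h3

lemma gapSet_surj {n : ℕ} (D : ℕ) :
    (Finset.Nat.antidiagonalTuple (n + 1) D).image gapSet
      = Finset.powersetCard n (Finset.Icc 1 (D + n)) := by
  apply Finset.eq_of_subset_of_card_le
  · intro S hS
    obtain ⟨a, ha, rfl⟩ := Finset.mem_image.1 hS
    rw [Finset.Nat.mem_antidiagonalTuple] at ha
    exact gapSet_mem a _ (by rw [ha])
  · rw [Finset.card_image_of_injOn, card_tuples]
    · simp
    · intro a ha b hb h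
      simp only [Finset.mem_coe, Finset.Nat.mem_antidiagonalTuple] at ha hb
      exact gapSet_inj a b (ha.trans hb.symm) h

/-- The order-preserving injection skipping `p`. -/
def skip (p x : ℕ) : ℕ := if x < p then x else x + 1

lemma skip_strictMono (p : ℕ) : StrictMono (skip p) := by
  intro x y h
  unfold skip
  split_ifs <;> omega

lemma gapSum_add_single {n : ℕ} (a : Fin (n + 1) → ℕ) (j : Fin (n + 1)) (i : ℕ) :
    gapSum (a + Pi.single j 1) i = gapSum a i + if (j : ℕ) < i then 1 else 0 := by
  have : ∀ l, gapExt (a + Pi.single j 1) l = gapExt a l + if l = (j : ℕ) then 1 else 0 := by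
    intro l
    unfold gapExt
    by_cases h : l < n + 1
    · simp [h, Pi.single_apply, Fin.ext_iff]
    · have : l ≠ (j : ℕ) := by have := j.2; omega
      simp [h, this]
  unfold gapSum
  simp only [this, Finset.sum_add_distrib]
  simp

lemma gapSet_skip {n : ℕ} (a : Fin (n + 1) → ℕ) (j : Fin (n + 1)) :
    (gapSet a).image (skip (gapSum a j + j + 1)) = gapSet (a + Pi.single j 1) := by
  unfold gapSet
  rw [Finset.image_image]
  apply Finset.image_congr
  intro i hi
  by_cases h : (j : ℕ) < i + 1
  · have := gapSum_mono a (show (j : ℕ) ≤ i + 1 by omega)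
    rw [Function.comp, skip, if_neg (by unfold gapPos; omega), gapPos, gapPos,
      gapSum_add_single, if_pos h]
    omega
  · have := gapSum_mono a (show i + 1 ≤ (j : ℕ) by omega)
    rw [Function.comp, skip, if_pos (by unfold gapPos; omega), gapPos, gapPos,
      gapSum_add_single, if_neg h]
    omega

lemma upclosed_of_step {n : ℕ} (U : Set (Fin (n + 1) → ℕ))
    (h : ∀ a ∈ U, ∀ j, a + Pi.single j 1 ∈ U) : ∀ x y, x ≤ y → x ∈ U → y ∈ U := by
  have key : ∀ N, ∀ x y : Fin (n + 1) → ℕ, x ≤ y → ∑ i, y i = ∑ i, x i + N → x ∈ U → y ∈ U := by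
    intro N
    induction N with
    | zero =>
      intro x y hxy hs hx
      have : ∀ i ∈ Finset.univ, x i = y i :=
        (Finset.sum_eq_sum_iff_of_le fun i _ => hxy i).1 (by omega)
      have : x = y := funext fun i => this i (Finset.mem_univ i)
      exact this ▸ hx
    | succ N ih =>
      intro x y hxy hs hx
      obtain ⟨j, _, hj⟩ := Finset.exists_lt_of_sum_lt (s := Finset.univ) (f := x) (g := y) (by omega)
      refine ih (x + Pi.single j 1) y ?_ ?_ (h x hx j)
      · intro i
        by_cases hij : i = j
        · subst hij; simpa using hj
        · simpa [hij] using hxy i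
      · simp only [Pi.add_apply, Finset.sum_add_distrib, hs]
        simp
        omega
  intro x y hxy hx
  have hle : ∑ i, x i ≤ ∑ i, y i := Finset.sum_le_sum fun i _ => hxy i
  exact key (∑ i, y i - ∑ i, x i) x y hxy (by omega) hx

/-! ### Leading terms -/

def IsLead {k ι κ : Type*} [Field k] [LinearOrder κ] (key : ι → κ) (U : Submodule k (ι →₀ k))
    (a : ι) : Prop := ∃ v ∈ U, v a ≠ 0 ∧ ∀ b, key a < key b → v b = 0

open scoped Classical in
lemma finrank_lead {k ι κ : Type*} [Field k] [LinearOrder κ] (key : ι → κ)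
    (hkey : Function.Injective key) (s : Finset ι) :
    ∀ U : Submodule k (ι →₀ k), U ≤ Finsupp.supported k k (↑s : Set ι) →
      Module.finrank k U = (s.filter (IsLead key U)).card := by
  induction s using Finset.induction_on_max_value key with
  | empty =>
    intro U hU
    have : U = ⊥ := by
      rw [Finset.coe_empty, Finsupp.supported_empty] at hU
      exact le_bot_iff.1 hU
    subst this
    simp
  | insert a s has hmax ih =>
    intro U hU
    have hfd : Module.Finite k (Finsupp.supported k k (↑(insert a s) : Set ι)) :=
      Module.Finite.equiv (Finsupp.supportedEquivFinsupp (M := k) (R := k)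
        (↑(insert a s) : Set ι)).symm
    have hfU : Module.Finite k U := Submodule.finiteDimensional_of_le hU
    have hz : ∀ v ∈ U, ∀ b, b ∉ insert a s → v b = 0 := by
      intro v hv b hb
      have := hU hv
      rw [Finsupp.mem_supported'] at this
      exact this b (by simpa using hb)
    set U0 := U ⊓ LinearMap.ker (Finsupp.lapply a : (ι →₀ k) →ₗ[k] k) with hU0
    have hU0s : U0 ≤ Finsupp.supported k k (↑s : Set ι) := by
      intro v hv
      rw [Finsupp.mem_supported']
      intro b hb
      by_cases hba : b = a
      · subst hba; simpa using hv.2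
      · exact hz v hv.1 b (by simp only [Finset.mem_insert, not_or]; exact ⟨hba, by simpa using hb⟩)
    have h0 := ih U0 hU0s
    have hf0 : s.filter (IsLead key U0) = s.filter (IsLead key U) := by
      apply Finset.filter_congr
      intro b hb
      constructor
      · rintro ⟨v, hv, h⟩
        exact ⟨v, hv.1, h⟩
      · rintro ⟨v, hv, h1, h2⟩
        refine ⟨v, ⟨hv, ?_⟩, h1, h2⟩
        have : key b < key a := lt_of_le_of_ne (hmax b hb) fun h => has (hkey h ▸ hb)
        simpa using h2 a this
    rw [hf0] at h0
    set e := (Finsupp.lapply a : (ι →₀ k) →ₗ[k] k).domRestrict U with he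
    have hrn := LinearMap.finrank_range_add_finrank_ker (K := k) (V := U) (V₂ := k) e
    have hker : Module.finrank k (LinearMap.ker e) = Module.finrank k U0 := by
      have : U0 = (LinearMap.ker e).map U.subtype := by
        ext v
        simp [hU0, he, LinearMap.mem_ker, and_comm]
      rw [this]
      exact (LinearEquiv.finrank_eq
        (Submodule.equivMapOfInjective _ U.injective_subtype _))
    rw [← hrn, hker, h0, Finset.filter_insert]
    by_cases hL : IsLead key U a
    · rw [if_pos hL, Finset.card_insert_of_notMem (by simp [has])]
      have : LinearMap.range e = ⊤ := by
        obtain ⟨v, hv, h1, _⟩ := hL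
        rw [LinearMap.range_eq_top]
        refine LinearMap.surjective fun h => h1 ?_
        have := LinearMap.congr_fun h ⟨v, hv⟩
        simpa [he] using this
      rw [this, finrank_top, Module.finrank_self, add_comm]
    · rw [if_neg hL]
      have : e = 0 := by
        ext ⟨v, hv⟩
        by_contra hne
        refine hL ⟨v, hv, by simpa [he] using hne, fun b hb => hz v hv b ?_⟩
        intro hmem
        rcases Finset.mem_insert.1 hmem with rfl | h
        · exact lt_irrefl _ hb
        · exact absurd (hmax b h) (not_le.2 hb)
      rw [this, LinearMap.range_zero, finrank_bot, zero_add]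
/-! ### The model of the induced module -/

def mv (i : ℕ) (S : Finset ℕ) : Finset ℕ :=
  if i ∈ S ∧ i + 1 ∉ S then insert (i + 1) (S.erase i) else S

def rk (i : ℕ) (S : Finset ℕ) : ℕ := (S.filter (· ≤ i)).card

lemma mv_of_not {i : ℕ} {S : Finset ℕ} (h : ¬(i ∈ S ∧ i + 1 ∉ S)) : mv i S = S := if_neg h

lemma mem_mv_of {i : ℕ} {S : Finset ℕ} (h : i ∈ S ∧ i + 1 ∉ S) (x : ℕ) :
    x ∈ mv i S ↔ x = i + 1 ∨ (x ≠ i ∧ x ∈ S) := by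
  rw [mv, if_pos h]; simp

lemma mem_mv_ne {i : ℕ} {S : Finset ℕ} (x : ℕ) (h1 : x ≠ i) (h2 : x ≠ i + 1) :
    x ∈ mv i S ↔ x ∈ S := by
  by_cases h : i ∈ S ∧ i + 1 ∉ S
  · rw [mem_mv_of h]; tauto
  · rw [mv_of_not h]

lemma mem_mv_self {i : ℕ} {S : Finset ℕ} : i ∈ mv i S ↔ i ∈ S ∧ i + 1 ∈ S := by
  by_cases h : i ∈ S ∧ i + 1 ∉ S
  · rw [mem_mv_of h]; simp [h.2]
  · rw [mv_of_not h]; tauto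

lemma mem_mv_succ {i : ℕ} {S : Finset ℕ} : i + 1 ∈ mv i S ↔ i ∈ S ∨ i + 1 ∈ S := by
  by_cases h : i ∈ S ∧ i + 1 ∉ S
  · rw [mem_mv_of h]; simp [h.1]
  · rw [mv_of_not h]; tauto

lemma mem_mv {i : ℕ} {S : Finset ℕ} (x : ℕ) : x ∈ mv i S ↔
    (x = i ∧ i ∈ S ∧ i + 1 ∈ S) ∨ (x = i + 1 ∧ (i ∈ S ∨ i + 1 ∈ S)) ∨
    (x ≠ i ∧ x ≠ i + 1 ∧ x ∈ S) := by
  by_cases h1 : x = i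
  · subst h1; rw [mem_mv_self]; simp
  by_cases h2 : x = i + 1
  · subst h2; rw [mem_mv_succ]; simp
  rw [mem_mv_ne x h1 h2]; tauto

lemma mv_card (i : ℕ) (S : Finset ℕ) : (mv i S).card = S.card := by
  unfold mv
  split_ifs with h
  · rw [Finset.card_insert_of_notMem (by simp [h.2]), Finset.card_erase_of_mem h.1]
    have := Finset.card_pos.2 ⟨i, h.1⟩
    omega
  · rfl

lemma rk_succ (i : ℕ) (S : Finset ℕ) : rk (i + 1) S = rk i S + if i + 1 ∈ S then 1 else 0 := by
  unfold rk
  have : S.filter (· ≤ i + 1) = S.filter (· ≤ i) ∪ S.filter (· = i + 1) := by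
    rw [← Finset.filter_or]
    apply Finset.filter_congr
    intro x _
    omega
  rw [this, Finset.card_union_of_disjoint, Finset.filter_eq']
  · split_ifs <;> simp
  · rw [Finset.disjoint_filter]
    intro x _ h1 h2
    omega

lemma rk_mv {l i : ℕ} (h : l ≠ i) (S : Finset ℕ) : rk l (mv i S) = rk l S := by
  by_cases hm : i ∈ S ∧ i + 1 ∉ S
  · rcases Nat.lt_or_ge l i with hl | hl
    · unfold rk
      congr 1
      ext x
      simp only [Finset.mem_filter, mem_mv_of hm]
      constructor
      · rintro ⟨h1 | h1, h2⟩
        · omega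
        · exact ⟨h1.2, h2⟩
      · rintro ⟨h1, h2⟩
        exact ⟨Or.inr ⟨by omega, h1⟩, h2⟩
    · have : (mv i S).filter (· ≤ l) = mv i (S.filter (· ≤ l)) := by
        have hm' : i ∈ S.filter (· ≤ l) ∧ i + 1 ∉ S.filter (· ≤ l) := by simp [hm, hl]
        ext x
        rw [mem_mv_of hm', Finset.mem_filter, Finset.mem_filter, mem_mv_of hm]
        constructor
        · rintro ⟨h1 | h1, h2⟩
          · exact Or.inl h1
          · exact Or.inr ⟨h1.1, h1.2, h2⟩
        · rintro (h1 | h1)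
          · exact ⟨Or.inl h1, by omega⟩
          · exact ⟨Or.inr ⟨h1.1, h1.2.1⟩, h1.2.2⟩
      rw [rk, this, mv_card, rk]
  · rw [mv_of_not hm]

def cf (k : Type) [Field k] (D : Finset ℕ) (i : ℕ) (S : Finset ℕ) : k :=
  if i ∈ S ∧ i + 1 ∈ S ∧ rk i S ∈ D then 0 else 1

section Model

lemma cf_one {D : Finset ℕ} {i : ℕ} {S : Finset ℕ} (h : ¬(i ∈ S ∧ i + 1 ∈ S)) :
    cf k D i S = 1 := if_neg (by tauto)

lemma cf_both {D : Finset ℕ} {i : ℕ} {S : Finset ℕ} (h1 : i ∈ S) (h2 : i + 1 ∈ S) :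
    cf k D i S = if rk i S ∈ D then 0 else 1 := by simp [cf, h1, h2]

lemma cf_sq (D : Finset ℕ) (i : ℕ) (S : Finset ℕ) : cf k D i S * cf k D i S = cf k D i S := by
  unfold cf; split_ifs <;> simp

lemma cf_congr {D : Finset ℕ} {i j : ℕ} {S S' : Finset ℕ} (h1 : i ∈ S ↔ j ∈ S')
    (h2 : i + 1 ∈ S ↔ j + 1 ∈ S') (h3 : rk i S = rk j S') : cf k D i S = cf k D j S' := by
  simp only [cf, h1, h2, h3]

/-- The 0-Hecke operator on the free vector space on finite subsets of `ℕ`. -/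
noncomputable def Tg (D : Finset ℕ) (i : ℕ) : (Finset ℕ →₀ k) →ₗ[k] (Finset ℕ →₀ k) :=
  Finsupp.linearCombination k fun S => Finsupp.single (mv i S) (cf k D i S)

lemma Tg_single (D : Finset ℕ) (i : ℕ) (S : Finset ℕ) (r : k) :
    Tg D i (Finsupp.single S r) = Finsupp.single (mv i S) (r * cf k D i S) := by
  simp [Tg, Finsupp.linearCombination_single]

lemma mv_idem (i : ℕ) (S : Finset ℕ) : mv i (mv i S) = mv i S := by
  ext x
  rw [mem_mv, mem_mv_self, mem_mv_succ, mem_mv]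
  tauto

lemma Tg_idem (D : Finset ℕ) (i : ℕ) :
    (Tg D i).comp (Tg D i) = (Tg D i : (Finset ℕ →₀ k) →ₗ[k] _) := by
  apply Finsupp.lhom_ext
  intro S r
  rw [LinearMap.comp_apply, Tg_single, Tg_single, mv_idem]
  congr 1
  by_cases h : i ∈ S ∧ i + 1 ∉ S
  · rw [cf_one (S := mv i S), mul_one]
    rw [mem_mv_self]; tauto
  · rw [mv_of_not h, mul_assoc, cf_sq]

lemma mv_comm {i j : ℕ} (h : i + 1 < j) (S : Finset ℕ) : mv i (mv j S) = mv j (mv i S) := by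
  ext x
  rw [mem_mv x (S := mv j S), mem_mv x (S := mv i S), mem_mv_ne i (by omega) (by omega),
    mem_mv_ne (i + 1) (by omega) (by omega), mem_mv_ne j (by omega) (by omega),
    mem_mv_ne (j + 1) (by omega) (by omega), mem_mv x, mem_mv x]
  grind

lemma cf_mv_far {D : Finset ℕ} {i j : ℕ} (h : i + 1 < j ∨ j + 1 < i) (S : Finset ℕ) :
    cf k D i (mv j S) = cf k D i S :=
  cf_congr (mem_mv_ne _ (by omega) (by omega)) (mem_mv_ne _ (by omega) (by omega))
    (rk_mv (by omega) S)

lemma Tg_comm (D : Finset ℕ) {i j : ℕ} (h : i + 1 < j) :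
    (Tg D i).comp (Tg D j) = (Tg D j).comp (Tg D i : (Finset ℕ →₀ k) →ₗ[k] _) := by
  apply Finsupp.lhom_ext
  intro S r
  rw [LinearMap.comp_apply, LinearMap.comp_apply, Tg_single, Tg_single, Tg_single, Tg_single,
    mv_comm h, cf_mv_far (Or.inl h), cf_mv_far (Or.inr h)]
  congr 1
  ring

lemma mv_braid (i : ℕ) (S : Finset ℕ) :
    mv i (mv (i + 1) (mv i S)) = mv (i + 1) (mv i (mv (i + 1) S)) := by
  ext x
  simp only [mem_mv]
  grind

lemma cf_braid (D : Finset ℕ) (i : ℕ) (S : Finset ℕ) :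
    cf k D i S * cf k D (i + 1) (mv i S) * cf k D i (mv (i + 1) (mv i S)) =
    cf k D (i + 1) S * cf k D i (mv (i + 1) S) * cf k D (i + 1) (mv i (mv (i + 1) S)) := by
  have m3 : ∀ S, i ∈ mv (i + 1) S ↔ i ∈ S := fun S => mem_mv_ne _ (by omega) (by omega)
  by_cases h0 : i ∈ S
  · by_cases h1 : i + 1 ∈ S
    · have hi : mv i S = S := mv_of_not (by tauto)
      rw [hi]
      by_cases h2 : i + 1 + 1 ∈ S
      · have hi' : mv (i + 1) S = S := mv_of_not (by tauto)
        rw [hi', hi]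
        linear_combination cf k D (i + 1) S * cf_sq (k := k) D i S - cf k D i S * cf_sq (k := k) D (i + 1) S
      · have n1 : i + 1 ∉ mv (i + 1) S := by rw [mem_mv_self]; tauto
        have n2 : i + 1 + 1 ∈ mv (i + 1) S := by rw [mem_mv_succ]; tauto
        have n0 : i ∈ mv (i + 1) S := (m3 S).2 h0
        rw [cf_one (i := i + 1) (S := S) (by tauto), cf_one (i := i) (S := mv (i + 1) S) (by tauto)]
        have : cf k D (i + 1) (mv i (mv (i + 1) S)) = cf k D i S := by
          apply cf_congr
          · rw [mem_mv_succ]; tauto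
          · rw [mem_mv_ne _ (by omega) (by omega)]; tauto
          · rw [rk_mv (by omega), rk_succ, if_neg n1, rk_mv (by omega), add_zero]
        rw [this]
        ring
    · have hi' : mv (i + 1) S = S := mv_of_not (by tauto)
      rw [hi', cf_one (i := i) (S := S) (by tauto), cf_one (i := i + 1) (S := S) (by tauto),
        cf_one (i := i) (S := mv (i + 1) (mv i S)) (by rw [m3, mem_mv_self]; tauto)]
      ring
  · have hi : mv i S = S := mv_of_not (by tauto)
    have n0 : i ∉ mv (i + 1) S := by rw [m3]; exact h0
    have hi2 : mv i (mv (i + 1) S) = mv (i + 1) S := mv_of_not (by tauto)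
    rw [hi, hi2, cf_one (i := i) (S := S) (by tauto),
      cf_one (i := i) (S := mv (i + 1) S) (by tauto)]
    by_cases hb : i + 1 ∈ S ∧ i + 1 + 1 ∈ S
    · rw [mv_of_not (i := i + 1) (S := S) (by tauto)]
      linear_combination - cf_sq (k := k) D (i + 1) S
    · rw [cf_one (S := mv (i + 1) S) (by rw [mem_mv_self]; tauto)]
      ring

lemma Tg_braid (D : Finset ℕ) (i : ℕ) :
    (Tg D i).comp ((Tg D (i + 1)).comp (Tg D i)) =
    (Tg D (i + 1)).comp ((Tg D i).comp (Tg D (i + 1) : (Finset ℕ →₀ k) →ₗ[k] _)) := by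
  apply Finsupp.lhom_ext
  intro S r
  simp only [LinearMap.comp_apply, Tg_single]
  rw [mv_braid]
  congr 1
  have := cf_braid (k := k) D i S
  simp only [mul_assoc] at this ⊢
  rw [this]

def okSet (n m : ℕ) : Set (Finset ℕ) := ↑(Finset.powersetCard n (Finset.Icc 1 m))

lemma mem_okSet {n m : ℕ} {S : Finset ℕ} :
    S ∈ okSet n m ↔ S ⊆ Finset.Icc 1 m ∧ S.card = n := by
  simp [okSet, Finset.mem_powersetCard]

lemma mv_ok {n m i : ℕ} (h : i + 1 ≤ m) {S : Finset ℕ} (hS : S ∈ okSet n m) :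
    mv i S ∈ okSet n m := by
  rw [mem_okSet] at *
  refine ⟨?_, (mv_card i S).trans hS.2⟩
  intro x hx
  rw [mem_mv] at hx
  rcases hx with ⟨rfl, h1, h2⟩ | ⟨rfl, h1⟩ | ⟨h1, h2, h3⟩
  · exact hS.1 h1
  · simp [h]
  · exact hS.1 h3

lemma Tg_ok (D : Finset ℕ) {n m i : ℕ} (h : i + 1 ≤ m) :
    ∀ v ∈ Finsupp.supported k k (okSet n m), Tg D i v ∈ Finsupp.supported k k (okSet n m) := by
  intro v hv
  rw [Finsupp.supported_eq_span_single] at hv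
  induction hv using Submodule.span_induction with
  | mem x hx =>
    obtain ⟨S, hS, rfl⟩ := hx
    rw [Tg_single]
    exact Finsupp.single_mem_supported k _ (mv_ok h hS)
  | zero => simp
  | add x y _ _ hx hy => rw [map_add]; exact Submodule.add_mem _ hx hy
  | smul a x _ hx => rw [map_smul]; exact Submodule.smul_mem _ _ hx

open scoped Classical in
/-- The concrete model of `M(α)`. -/
noncomputable def modelH (k : Type) [Field k] (D : Finset ℕ) (n : ℕ) : HSeq k where
  V m := Finsupp.supported k k (okSet n m)
  T m i := if h : i + 1 ≤ m then (Tg D i).restrict (Tg_ok D h) else 0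
  φ m := Submodule.inclusion (Finsupp.supported_mono (by
    intro S hS
    rw [mem_okSet] at *
    exact ⟨hS.1.trans (Finset.Icc_subset_Icc_right (by omega)), hS.2⟩))

/-- The underlying formal sum of an element of the model. -/
noncomputable def mval (D : Finset ℕ) (n m : ℕ) : (modelH k D n).V m →ₗ[k] (Finset ℕ →₀ k) :=
  Submodule.subtype (Finsupp.supported k k (okSet n m))

lemma mval_inj (D : Finset ℕ) (n m : ℕ) : Function.Injective (mval (k := k) D n m) :=
  Submodule.injective_subtype _

lemma mval_mem (D : Finset ℕ) (n m : ℕ) (v : (modelH k D n).V m) :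
    mval D n m v ∈ Finsupp.supported k k (okSet n m) := Subtype.property _

lemma modelH_T (D : Finset ℕ) (n m i : ℕ) (h : i + 1 ≤ m) (v : (modelH k D n).V m) :
    mval D n m ((modelH k D n).T m i v) = Tg D i (mval D n m v) := by
  simp only [modelH]
  rw [dif_pos h]
  rfl

lemma modelH_φ (D : Finset ℕ) (n m : ℕ) (v : (modelH k D n).V m) :
    mval D n (m + 1) ((modelH k D n).φ m v) = mval D n m v := rfl

lemma transit_self (X : HSeq k) {n : ℕ} (h : n ≤ n) (v : X.V n) : X.transit h v = v := by
  unfold HSeq.transit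
  exact Nat.leRecOn_self (C := X.V) v

lemma transit_succ (X : HSeq k) {n m : ℕ} (h : n ≤ m) (h' : n ≤ m + 1) (v : X.V n) :
    X.transit h' v = X.φ m (X.transit h v) := by
  unfold HSeq.transit
  exact Nat.leRecOn_succ (C := X.V) h v

lemma modelH_transit (D : Finset ℕ) (n l m : ℕ) (h : l ≤ m) (v : (modelH k D n).V l) :
    mval D n m ((modelH k D n).transit h v) = mval D n l v := by
  induction m, h using Nat.le_induction with
  | base => rw [transit_self]
  | succ m h ih =>
    rw [← ih, transit_succ _ h, modelH_φ]

lemma modelH_isHModule (D : Finset ℕ) (n : ℕ) : (modelH k D n).IsHModule := by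
  refine ⟨?_, ?_, ?_, ?_, ?_⟩
  · intro m i _ h
    apply LinearMap.ext
    intro v
    apply mval_inj
    rw [LinearMap.comp_apply, modelH_T _ _ _ _ h, modelH_T _ _ _ _ h]
    exact LinearMap.congr_fun (Tg_idem D i) _
  · intro m i _ h
    apply LinearMap.ext
    intro v
    apply mval_inj
    simp only [LinearMap.comp_apply]
    rw [modelH_T _ _ _ _ (by omega), modelH_T _ _ _ _ (by omega), modelH_T _ _ _ _ (by omega),
      modelH_T _ _ _ _ (by omega), modelH_T _ _ _ _ (by omega), modelH_T _ _ _ _ (by omega)]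
    exact LinearMap.congr_fun (Tg_braid D i) _
  · intro m i j _ hij h
    apply LinearMap.ext
    intro v
    apply mval_inj
    simp only [LinearMap.comp_apply]
    rw [modelH_T _ _ _ _ (by omega), modelH_T _ _ _ _ (by omega), modelH_T _ _ _ _ (by omega),
      modelH_T _ _ _ _ (by omega)]
    exact LinearMap.congr_fun (Tg_comm D hij) _
  · intro m i _ h
    apply LinearMap.ext
    intro v
    apply mval_inj
    simp only [LinearMap.comp_apply]
    rw [modelH_T _ _ _ _ (by omega), modelH_φ, modelH_φ, modelH_T _ _ _ _ (by omega)]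
  · intro l m h j h1 h2 v
    apply mval_inj
    rw [modelH_T _ _ _ _ h2, modelH_transit]
    have hv := mval_mem D n l v
    revert hv
    generalize mval D n l v = x
    intro hv
    rw [Finsupp.supported_eq_span_single] at hv
    induction hv using Submodule.span_induction with
    | mem x hx =>
      obtain ⟨S, hS, rfl⟩ := hx
      rw [mem_okSet] at hS
      have hj : j ∉ S := fun hj => by have := Finset.mem_Icc.1 (hS.1 hj); omega
      rw [Tg_single, mv_of_not (by tauto), cf_one (by tauto), mul_one]
    | zero => simp
    | add x y _ _ hx hy => rw [map_add, hx, hy]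
    | smul a x _ hx => rw [map_smul, hx]

end Model
/-! ### The universal map out of the model -/

def mov (i : ℕ) (S : Finset ℕ) : Prop := 1 ≤ i ∧ i ∉ S ∧ i + 1 ∈ S

def dn (i : ℕ) (S : Finset ℕ) : Finset ℕ := insert i (S.erase (i + 1))

lemma mem_dn {i : ℕ} {S : Finset ℕ} {x : ℕ} : x ∈ dn i S ↔ x = i ∨ (x ≠ i + 1 ∧ x ∈ S) := by
  simp [dn]

lemma dn_sum {i : ℕ} {S : Finset ℕ} (h : mov i S) : (dn i S).sum id < S.sum id := by
  have h1 : i ∉ S.erase (i + 1) := by simp [h.2.1]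
  rw [dn, Finset.sum_insert h1, ← Finset.add_sum_erase S id h.2.2]
  simp

lemma mv_dn {i : ℕ} {S : Finset ℕ} (h : mov i S) : mv i (dn i S) = S := by
  obtain ⟨_, h1, h2⟩ := h
  have hm : i ∈ dn i S ∧ i + 1 ∉ dn i S := by simp [mem_dn]
  ext x
  rw [mem_mv_of hm, mem_dn]
  by_cases hx : x = i
  · subst hx; simp [h1]
  by_cases hx' : x = i + 1
  · subst hx'; simp [h2]
  simp [hx, hx']

lemma dn_mv {i : ℕ} {S : Finset ℕ} (h : i ∈ S ∧ i + 1 ∉ S) : dn i (mv i S) = S := by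
  ext x
  rw [mem_dn, mem_mv_of h]
  by_cases hx : x = i
  · subst hx; simp [h.1]
  by_cases hx' : x = i + 1
  · subst hx'; simp [h.2]
  simp [hx, hx']

lemma dn_ok {n m i : ℕ} {S : Finset ℕ} (h : mov i S) (hS : S ∈ okSet n m) :
    dn i S ∈ okSet n m := by
  rw [mem_okSet] at *
  refine ⟨?_, ?_⟩
  · intro x hx
    rw [mem_dn] at hx
    rcases hx with rfl | hx
    · have := Finset.mem_Icc.1 (hS.1 h.2.2)
      have := h.1
      rw [Finset.mem_Icc]; omega
    · exact hS.1 hx.2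
  · rw [← hS.2, ← mv_card i (dn i S), mv_dn h]

lemma mov_le {n m i : ℕ} {S : Finset ℕ} (h : mov i S) (hS : S ∈ okSet n m) : i + 1 ≤ m := by
  rw [mem_okSet] at hS
  exact (Finset.mem_Icc.1 (hS.1 h.2.2)).2

lemma eq_Icc_of_not_mov {n m : ℕ} {S : Finset ℕ} (hS : S ∈ okSet n m) (h : ¬∃ i, mov i S) :
    S = Finset.Icc 1 n := by
  rw [mem_okSet] at hS
  have hdown : ∀ t x, x ∈ S → t < x → x - t ∈ S := by
    intro t
    induction t with
    | zero => intro x hx _; exact hx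
    | succ t ih =>
      intro x hx ht
      have h1 := ih x hx (by omega)
      by_contra hc
      refine h ⟨x - (t + 1), by omega, hc, ?_⟩
      rwa [show x - (t + 1) + 1 = x - t by omega]
  apply Finset.eq_of_subset_of_card_le
  · intro x hx
    have h1 := Finset.mem_Icc.1 (hS.1 hx)
    have h2 : Finset.Icc 1 x ⊆ S := by
      intro y hy
      rw [Finset.mem_Icc] at hy
      have := hdown (x - y) x hx (by omega)
      rwa [show x - (x - y) = y by omega] at this
    have h3 := Finset.card_le_card h2
    rw [Nat.card_Icc, hS.2] at h3
    rw [Finset.mem_Icc]; omega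
  · rw [Nat.card_Icc, hS.2]; omega

lemma not_mov_Icc (n : ℕ) : ¬∃ i, mov i (Finset.Icc 1 n) := by
  rintro ⟨i, h1, h2, h3⟩
  rw [Finset.mem_Icc] at h2 h3
  omega

section Universal

open scoped Classical in
noncomputable def uvec (X : HSeq k) (m : ℕ) (base : X.V m) (S : Finset ℕ) : X.V m :=
  if h : ∃ i, mov i S then X.T m h.choose (uvec X m base (dn h.choose S)) else base
termination_by S.sum id
decreasing_by exact dn_sum h.choose_spec

lemma uvec_pos (X : HSeq k) (m : ℕ) (base : X.V m) (S : Finset ℕ) (h : ∃ i, mov i S) :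
    uvec X m base S = X.T m h.choose (uvec X m base (dn h.choose S)) := by
  rw [uvec, dif_pos h]

lemma uvec_neg (X : HSeq k) (m : ℕ) (base : X.V m) (S : Finset ℕ) (h : ¬∃ i, mov i S) :
    uvec X m base S = base := by
  rw [uvec, dif_neg h]

lemma T_comm' (X : HSeq k) (hX : X.IsHModule) {m i j : ℕ} (hi : 1 ≤ i) (hj : 1 ≤ j)
    (hi' : i + 1 ≤ m) (hj' : j + 1 ≤ m) (h : i + 1 < j ∨ j + 1 < i) (x : X.V m) :
    X.T m i (X.T m j x) = X.T m j (X.T m i x) := by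
  rcases h with h | h
  · exact LinearMap.congr_fun (hX.2.2.1 m i j hi h hj') x
  · exact (LinearMap.congr_fun (hX.2.2.1 m j i hj h hi') x).symm

lemma uvec_step (X : HSeq k) (hX : X.IsHModule) (n m : ℕ) (base : X.V m) :
    ∀ N (S : Finset ℕ), S.sum id < N → S ∈ okSet n m → ∀ i, mov i S →
      X.T m i (uvec X m base (dn i S)) = uvec X m base S := by
  intro N
  induction N with
  | zero => intro S h; omega
  | succ N ih =>
    intro S hN hS i hi
    have hex : ∃ i, mov i S := ⟨i, hi⟩
    rw [uvec_pos X m base S hex]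
    have hj := hex.choose_spec
    generalize hex.choose = j at hj ⊢
    by_cases hij : i = j
    · rw [hij]
    have hfar : i + 1 < j ∨ j + 1 < i := by
      have h1 : i + 1 ≠ j := fun h => hj.2.1 (h ▸ hi.2.2)
      have h2 : j + 1 ≠ i := fun h => hi.2.1 (h ▸ hj.2.2)
      omega
    have mi : mov i (dn j S) := by
      refine ⟨hi.1, ?_, ?_⟩ <;> rw [mem_dn]
      · rintro (h | h)
        · exact hij h
        · exact hi.2.1 h.2
      · exact Or.inr ⟨by omega, hi.2.2⟩
    have mj : mov j (dn i S) := by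
      refine ⟨hj.1, ?_, ?_⟩ <;> rw [mem_dn]
      · rintro (h | h)
        · exact hij h.symm
        · exact hj.2.1 h.2
      · exact Or.inr ⟨by omega, hj.2.2⟩
    have hc : dn i (dn j S) = dn j (dn i S) := by
      ext x; simp only [mem_dn]; grind
    have s1 := dn_sum hi
    have s2 := dn_sum hj
    rw [← ih (dn j S) (by omega) (dn_ok hj hS) i mi, ← ih (dn i S) (by omega) (dn_ok hi hS) j mj,
      hc, T_comm' X hX hi.1 hj.1 (mov_le hi hS) (mov_le hj hS) hfar]

lemma uvec_T (X : HSeq k) (hX : X.IsHModule) (D : Finset ℕ) (n m : ℕ) (base : X.V m)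
    (hb1 : ∀ i, n + 1 ≤ i → i + 1 ≤ m → X.T m i base = base)
    (hb2 : ∀ i, 1 ≤ i → i + 1 ≤ n → X.T m i base = (if i ∈ D then (0 : k) else 1) • base) :
    ∀ N (S : Finset ℕ), S.sum id < N → S ∈ okSet n m → ∀ i, 1 ≤ i → i + 1 ≤ m →
      X.T m i (uvec X m base S) = cf k D i S • uvec X m base (mv i S) := by
  have step : ∀ S ∈ okSet n m, ∀ i, mov i S →
      X.T m i (uvec X m base (dn i S)) = uvec X m base S :=
    fun S hS i hi => uvec_step X hX n m base _ S (Nat.lt_succ_self _) hS i hi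
  intro N
  induction N with
  | zero => intro S h; omega
  | succ N ih =>
    intro S hN hS i hi him
    by_cases hA : i ∈ S ∧ i + 1 ∉ S
    · rw [cf_one (by tauto), one_smul]
      have hm : mov i (mv i S) :=
        ⟨hi, by rw [mem_mv_self]; tauto, by rw [mem_mv_succ]; tauto⟩
      rw [← step _ (mv_ok him hS) i hm, dn_mv hA]
    rw [mv_of_not hA]
    by_cases hB : mov i S
    · rw [cf_one (by have := hB.2.1; tauto), one_smul, ← step S hS i hB]
      exact LinearMap.congr_fun (hX.1 m i hi him) _
    have hiff : i ∈ S ↔ i + 1 ∈ S := by unfold mov at hB; tauto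
    by_cases hex : ∃ j, mov j S
    · obtain ⟨j, hj⟩ := hex
      have sj := dn_sum hj
      have hjm := mov_le hj hS
      by_cases h1 : j + 1 = i
      · subst h1
        have hS1 : j + 1 ∈ S := hj.2.2
        have hS2 : j + 1 + 1 ∈ S := hiff.1 hS1
        have hj0 := hj.2.1
        have m1 : mov (j + 1) (dn j S) :=
          ⟨by omega, by simp [mem_dn], by simp [mem_dn, hS2]⟩
        have s1 := dn_sum m1
        have hok1 := dn_ok hj hS
        have hok2 := dn_ok m1 hok1
        have b1 : j ∈ dn (j + 1) (dn j S) := by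
          rw [mem_dn]; exact Or.inr ⟨by omega, by simp [mem_dn]⟩
        have b2 : j + 1 ∈ dn (j + 1) (dn j S) := by simp [mem_dn]
        have hI := ih (dn (j + 1) (dn j S)) (by omega) hok2 j hj.1 (by omega)
        rw [mv_of_not (by tauto)] at hI
        have hcf : cf k D j (dn (j + 1) (dn j S)) = cf k D (j + 1) S := by
          apply cf_congr
          · tauto
          · tauto
          · have e1 : rk (j + 1) S = rk (j + 1) (dn j S) := by
              conv_lhs => rw [← mv_dn hj]
              exact rk_mv (by omega) _
            have e2 : rk j (dn j S) = rk j (dn (j + 1) (dn j S)) := by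
              conv_lhs => rw [← mv_dn m1]
              exact rk_mv (by omega) _
            rw [e1, rk_succ, if_neg m1.2.1, e2, add_zero]
        have hbr := LinearMap.congr_fun (hX.2.1 m j hj.1 (by omega))
          (uvec X m base (dn (j + 1) (dn j S)))
        simp only [LinearMap.comp_apply] at hbr
        rw [hI, step _ hok1 _ m1, step _ hS _ hj, map_smul, map_smul, step _ hok1 _ m1,
          step _ hS _ hj, hcf] at hbr
        exact hbr.symm
      · by_cases h2 : j = i + 1
        · subst h2
          have hn1 : i + 1 ∉ S := hj.2.1
          have hn0 : i ∉ S := by tauto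
          have m1 : mov i (dn (i + 1) S) :=
            ⟨hi, by simp [mem_dn, hn0], by simp [mem_dn]⟩
          have s1 := dn_sum m1
          have hok1 := dn_ok hj hS
          have hok2 := dn_ok m1 hok1
          have b1 : i + 1 ∉ dn i (dn (i + 1) S) := by simp [mem_dn]
          have hI := ih (dn i (dn (i + 1) S)) (by omega) hok2 (i + 1) (by omega) (by omega)
          rw [mv_of_not (by tauto), cf_one (by tauto), one_smul] at hI
          have hbr := LinearMap.congr_fun (hX.2.1 m i hi (by omega))
            (uvec X m base (dn i (dn (i + 1) S)))
          simp only [LinearMap.comp_apply] at hbr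
          rw [hI, step _ hok1 _ m1, step _ hS _ hj] at hbr
          rw [cf_one (by tauto), one_smul]
          exact hbr
        · have hij : i ≠ j := by
            rintro rfl
            exact hB hj
          have hfar : i + 1 < j ∨ j + 1 < i := by omega
          have hI := ih (dn j S) (by omega) (dn_ok hj hS) i hi him
          have e : cf k D i (dn j S) = cf k D i S := by
            conv_rhs => rw [← mv_dn hj]
            exact (cf_mv_far hfar _).symm
          have hnm : ¬(i ∈ dn j S ∧ i + 1 ∉ dn j S) := by
            simp only [mem_dn]
            have : i + 1 ≠ j := by omega
            grind
          rw [mv_of_not hnm, e] at hI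
          rw [← step S hS j hj, T_comm' X hX hi hj.1 him hjm hfar, hI, map_smul]
    · rw [uvec_neg X m base S hex]
      have hSI := eq_Icc_of_not_mov hS hex
      subst hSI
      rw [Finset.mem_Icc, Finset.mem_Icc] at hiff
      by_cases hin : i + 1 ≤ n
      · rw [hb2 i hi hin, cf_both (by rw [Finset.mem_Icc]; omega) (by rw [Finset.mem_Icc]; omega)]
        have : rk i (Finset.Icc 1 n) = i := by
          have h' : (Finset.Icc 1 n).filter (· ≤ i) = Finset.Icc 1 i := by
            ext x
            simp only [Finset.mem_filter, Finset.mem_Icc]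
            omega
          rw [rk, h', Nat.card_Icc]; omega
        rw [this]
      · rw [hb1 i (by omega) him, cf_one (by simp only [Finset.mem_Icc]; omega), one_smul]

lemma uvec_φ (X : HSeq k) (hX : X.IsHModule) (n m : ℕ) (base : X.V m) :
    ∀ N (S : Finset ℕ), S.sum id < N → S ∈ okSet n m →
      X.φ m (uvec X m base S) = uvec X (m + 1) (X.φ m base) S := by
  intro N
  induction N with
  | zero => intro S h; omega
  | succ N ih =>
    intro S hN hS
    by_cases hex : ∃ i, mov i S
    · rw [uvec_pos _ _ _ _ hex, uvec_pos _ _ _ _ hex]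
      have hj := hex.choose_spec
      generalize hex.choose = j at hj ⊢
      have := dn_sum hj
      rw [← ih (dn j S) (by omega) (dn_ok hj hS)]
      exact (LinearMap.congr_fun (hX.2.2.2.1 m j hj.1 (mov_le hj hS)) _).symm
    · rw [uvec_neg _ _ _ _ hex, uvec_neg _ _ _ _ hex]

lemma T_transit (X : HSeq k) (hX : X.IsHModule) {n m i : ℕ} (h : n ≤ m) (hi : 1 ≤ i)
    (hin : i + 1 ≤ n) (v : X.V n) : X.T m i (X.transit h v) = X.transit h (X.T n i v) := by
  induction m, h using Nat.le_induction with
  | base => rw [transit_self, transit_self]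
  | succ m h ih =>
    rw [transit_succ X h, transit_succ X h, ← ih]
    exact LinearMap.congr_fun (hX.2.2.2.1 m i hi (by omega)) _

lemma transit_smul (X : HSeq k) {n m : ℕ} (h : n ≤ m) (c : k) (v : X.V n) :
    X.transit h (c • v) = c • X.transit h v := by
  induction m, h using Nat.le_induction with
  | base => rw [transit_self, transit_self]
  | succ m h ih => rw [transit_succ X h, transit_succ X h, ih, map_smul]

noncomputable def ubase (X : HSeq k) (n : ℕ) (v : X.V n) (m : ℕ) : X.V m :=
  if h : n ≤ m then X.transit h v else 0

lemma okSet_le {n m : ℕ} {S : Finset ℕ} (hS : S ∈ okSet n m) : n ≤ m := by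
  rw [mem_okSet] at hS
  have := Finset.card_le_card hS.1
  rw [Nat.card_Icc, hS.2] at this
  omega

noncomputable def gmap (X : HSeq k) (D : Finset ℕ) (n : ℕ) (v : X.V n) (m : ℕ) :
    (modelH k D n).V m →ₗ[k] X.V m :=
  (Finsupp.linearCombination k (uvec X m (ubase X n v m))).comp (mval D n m)

lemma model_induct {D : Finset ℕ} {n m : ℕ} {M : Type} [AddCommGroup M] [Module k M]
    (F G : (Finset ℕ →₀ k) →ₗ[k] M)
    (h : ∀ S ∈ okSet n m, F (Finsupp.single S 1) = G (Finsupp.single S 1))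
    (x : (modelH k D n).V m) : F (mval D n m x) = G (mval D n m x) := by
  have hx := mval_mem D n m x
  rw [Finsupp.supported_eq_span_single] at hx
  refine LinearMap.eqOn_span (f := F) (g := G) ?_ hx
  rintro _ ⟨S, hS, rfl⟩
  exact h S hS

lemma gmap_T (X : HSeq k) (hX : X.IsHModule) (D : Finset ℕ) (n : ℕ) (v : X.V n)
    (hv : ∀ i, 1 ≤ i → i + 1 ≤ n → X.T n i v = (if i ∈ D then (0 : k) else 1) • v)
    (m i : ℕ) (hi : 1 ≤ i) (him : i + 1 ≤ m) :
    (X.T m i).comp (gmap X D n v m) = (gmap X D n v m).comp ((modelH k D n).T m i) := by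
  apply LinearMap.ext
  intro x
  simp only [LinearMap.comp_apply, gmap]
  rw [modelH_T _ _ _ _ him]
  refine model_induct ((X.T m i).comp (Finsupp.linearCombination k (uvec X m (ubase X n v m))))
    ((Finsupp.linearCombination k (uvec X m (ubase X n v m))).comp (Tg D i)) ?_ x
  intro S hS
  have hnm := okSet_le hS
  simp only [LinearMap.comp_apply, Tg_single, Finsupp.linearCombination_single, one_smul, one_mul]
  refine uvec_T X hX D n m _ ?_ ?_ _ S (Nat.lt_succ_self _) hS i hi him
  · intro i h1 h2
    rw [ubase, dif_pos hnm]
    exact hX.2.2.2.2 n m hnm i h1 h2 v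
  · intro i h1 h2
    rw [ubase, dif_pos hnm, T_transit X hX hnm h1 h2, hv i h1 h2, transit_smul]

lemma gmap_φ (X : HSeq k) (hX : X.IsHModule) (D : Finset ℕ) (n : ℕ) (v : X.V n) (m : ℕ) :
    (X.φ m).comp (gmap X D n v m) = (gmap X D n v (m + 1)).comp ((modelH k D n).φ m) := by
  apply LinearMap.ext
  intro x
  simp only [LinearMap.comp_apply, gmap]
  rw [modelH_φ]
  refine model_induct ((X.φ m).comp (Finsupp.linearCombination k (uvec X m (ubase X n v m))))
    (Finsupp.linearCombination k (uvec X (m + 1) (ubase X n v (m + 1)))) ?_ x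
  intro S hS
  have hnm := okSet_le hS
  simp only [LinearMap.comp_apply, Finsupp.linearCombination_single, one_smul]
  rw [uvec_φ X hX n m _ _ S (Nat.lt_succ_self _) hS]
  congr 1
  rw [ubase, ubase, dif_pos hnm, dif_pos (by omega), transit_succ X hnm]

lemma induced_embeds (n : ℕ) (α : Composition n) (X : HSeq k) (v : X.V n)
    (hX : IsInducedModule n α X v) :
    ∃ f : ∀ m, X.V m →ₗ[k] (Finset ℕ →₀ k),
      (∀ m, Function.Injective (f m)) ∧
      (∀ m x, f m x ∈ Finsupp.supported k k (okSet n m)) ∧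
      (∀ m i, 1 ≤ i → i + 1 ≤ m → ∀ x, f m (X.T m i x) = Tg (compDescents α) i (f m x)) ∧
      (∀ m x, f (m + 1) (X.φ m x) = f m x) := by
  obtain ⟨hmod, hv, huniv⟩ := hX
  set D := compDescents α with hD
  have hok : Finset.Icc 1 n ∈ okSet n n := by rw [mem_okSet]; simp
  let w : (modelH k D n).V n :=
    (⟨Finsupp.single (Finset.Icc 1 n) 1, Finsupp.single_mem_supported k _ hok⟩ :
      Finsupp.supported k k (okSet n n))
  have hw : mval D n n w = Finsupp.single (Finset.Icc 1 n) 1 := rfl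
  obtain ⟨f, ⟨hf1, hf2, hf3⟩, -⟩ := huniv (modelH k D n) (modelH_isHModule D n) w (by
    intro i h1 h2
    apply mval_inj
    rw [modelH_T _ _ _ _ h2, map_smul, hw, Tg_single, one_mul]
    have a1 : i ∈ Finset.Icc 1 n := by rw [Finset.mem_Icc]; omega
    have a2 : i + 1 ∈ Finset.Icc 1 n := by rw [Finset.mem_Icc]; omega
    rw [mv_of_not (by tauto), cf_both a1 a2, Finsupp.smul_single, smul_eq_mul, mul_one]
    have : rk i (Finset.Icc 1 n) = i := by
      have h' : (Finset.Icc 1 n).filter (· ≤ i) = Finset.Icc 1 i := by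
        ext x
        simp only [Finset.mem_filter, Finset.mem_Icc]
        omega
      rw [rk, h', Nat.card_Icc]; omega
    rw [this])
  have hgf : ∀ m x, gmap X D n v m (f m x) = x := by
    have hu := (huniv X hmod v hv).unique
      (y₁ := fun m => (gmap X D n v m).comp (f m)) (y₂ := fun m => LinearMap.id)
      ⟨?_, ?_, ?_⟩ ⟨rfl, fun _ _ _ _ => rfl, fun _ => rfl⟩
    · intro m x
      exact LinearMap.congr_fun (congrFun hu m) x
    · rw [LinearMap.comp_apply, hf1, gmap, LinearMap.comp_apply, hw,
        Finsupp.linearCombination_single, one_smul, uvec_neg _ _ _ _ (not_mov_Icc n), ubase,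
        dif_pos le_rfl, transit_self]
    · intro m i h1 h2
      rw [← LinearMap.comp_assoc, gmap_T X hmod D n v hv m i h1 h2, LinearMap.comp_assoc,
        hf2 m i h1 h2, LinearMap.comp_assoc]
    · intro m
      rw [← LinearMap.comp_assoc, gmap_φ X hmod D n v m, LinearMap.comp_assoc,
        hf3 m, LinearMap.comp_assoc]
  refine ⟨fun m => (mval D n m).comp (f m), ?_, ?_, ?_, ?_⟩
  · intro m x y hxy
    have := mval_inj D n m hxy
    rw [← hgf m x, ← hgf m y, this]
  · intro m x
    exact mval_mem D n m _
  · intro m i h1 h2 x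
    rw [LinearMap.comp_apply, LinearMap.comp_apply, ← modelH_T _ _ _ _ h2]
    congr 1
    exact (LinearMap.congr_fun (hf2 m i h1 h2) x).symm
  · intro m x
    have h := LinearMap.congr_fun (hf3 m) x
    rw [LinearMap.comp_apply, LinearMap.comp_apply] at h ⊢
    rw [← h, modelH_φ]

end Universal
/-! ### Insertion maps -/

lemma mem_image_skip {p x : ℕ} {S : Finset ℕ} :
    x ∈ S.image (skip p) ↔ (x < p ∧ x ∈ S) ∨ (p < x ∧ x - 1 ∈ S) := by
  rw [Finset.mem_image]
  constructor
  · rintro ⟨y, hy, rfl⟩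
    unfold skip
    split_ifs with h
    · exact Or.inl ⟨h, hy⟩
    · exact Or.inr ⟨by omega, by simpa using hy⟩
  · rintro (⟨h, hx⟩ | ⟨h, hx⟩)
    · exact ⟨x, hx, by rw [skip, if_pos h]⟩
    · exact ⟨x - 1, hx, by rw [skip, if_neg (by omega)]; omega⟩

lemma mv_skip (p : ℕ) (S : Finset ℕ) : mv p (S.image (skip (p + 1))) = S.image (skip p) := by
  ext x
  rw [mem_mv]
  simp only [mem_image_skip]
  by_cases h1 : x = p
  · subst h1; simp
  by_cases h2 : x = p + 1
  · subst h2; simp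
  have e1 : x < p + 1 ↔ x < p := by omega
  have e2 : p + 1 < x ↔ p < x := by omega
  simp [h1, h2, e1, e2]

lemma Tg_skip (D : Finset ℕ) (p : ℕ) (v : Finset ℕ →₀ k) :
    Tg D p (v.mapDomain (Finset.image (skip (p + 1)))) = v.mapDomain (Finset.image (skip p)) := by
  have : (Tg D p).comp (Finsupp.lmapDomain k k (Finset.image (skip (p + 1)))) =
      Finsupp.lmapDomain k k (Finset.image (skip p)) := by
    apply Finsupp.lhom_ext
    intro S r
    simp only [LinearMap.comp_apply, Finsupp.lmapDomain_apply, Finsupp.mapDomain_single, Tg_single]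
    rw [mv_skip, cf_one, mul_one]
    rintro ⟨_, h⟩
    rw [mem_image_skip] at h
    omega
  exact LinearMap.congr_fun this v

lemma skip_closed (D : Finset ℕ) (n m : ℕ) (P Q : Submodule k (Finset ℕ →₀ k))
    (hP : P ≤ Finsupp.supported k k (okSet n m)) (hPQ : P ≤ Q)
    (hQ : ∀ i, 1 ≤ i → i + 1 ≤ m + 1 → ∀ v ∈ Q, Tg D i v ∈ Q) (v : Finset ℕ →₀ k) (hv : v ∈ P) :
    ∀ t p, p + t = m + 1 → 1 ≤ p → v.mapDomain (Finset.image (skip p)) ∈ Q := by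
  intro t
  induction t with
  | zero =>
    intro p hp _
    have : v.mapDomain (Finset.image (skip p)) = v := by
      conv_rhs => rw [← Finsupp.mapDomain_id (v := v)]
      apply Finsupp.mapDomain_congr
      intro S hS
      have hS' := mem_okSet.1 ((Finsupp.mem_supported k v).1 (hP hv) hS)
      ext x
      rw [mem_image_skip, id]
      constructor
      · rintro (h | h)
        · exact h.2
        · have := Finset.mem_Icc.1 (hS'.1 h.2); omega
      · intro h
        have := Finset.mem_Icc.1 (hS'.1 h)
        exact Or.inl ⟨by omega, h⟩
    rw [this]
    exact hPQ hv
  | succ t ih =>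
    intro p hp h1
    rw [← Tg_skip D]
    exact hQ p h1 (by omega) _ (ih (p + 1) (by omega) (by omega))

lemma lead_skip (p : ℕ) (P Q : Submodule k (Finset ℕ →₀ k))
    (h : ∀ v ∈ P, v.mapDomain (Finset.image (skip p)) ∈ Q) (S : Finset ℕ)
    (hS : IsLead (fun S : Finset ℕ => toColex S) P S) :
    IsLead (fun S : Finset ℕ => toColex S) Q (S.image (skip p)) := by
  obtain ⟨v, hv, h1, h2⟩ := hS
  have hinj : Function.Injective (Finset.image (skip p)) :=
    Finset.image_injective (skip_strictMono p).injective
  refine ⟨_, h v hv, by rwa [Finsupp.mapDomain_apply hinj], ?_⟩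
  intro B hB
  by_cases hr : B ∈ Set.range (Finset.image (skip p))
  · obtain ⟨B', rfl⟩ := hr
    rw [Finsupp.mapDomain_apply hinj]
    exact h2 B' ((Finset.Colex.toColex_image_lt_toColex_image (skip_strictMono p)).1 hB)
  · exact Finsupp.mapDomain_of_notMem_range _ _ hr

open Finset in
open scoped Classical in
lemma growth_main (n : ℕ) (α : Composition n)
    (X : HSeq k) (vα : X.V n) (hX : IsInducedModule n α X vα)
    (W : ∀ m, Submodule k (X.V m)) (hW : X.IsSub W) :
    ∃ U : Set (Fin (n + 1) → ℕ), (∀ x y, x ≤ y → x ∈ U → y ∈ U) ∧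
      (∀ D, Module.finrank k (W (D + n))
        = #((Finset.Nat.antidiagonalTuple (n + 1) D).filter (· ∈ U))) ∧
      (∀ m, Module.finrank k (W m) ≤ m.choose n) ∧
      (∀ m, W m ≠ ⊥ → Module.finrank k (W m) ≠ 0) := by
  obtain ⟨f, finj, fsup, fT, fφ⟩ := induced_embeds n α X vα hX
  set P : ∀ m, Submodule k (Finset ℕ →₀ k) := fun m => (W m).map (f m) with hP
  have hPs : ∀ m, P m ≤ Finsupp.supported k k (okSet n m) := by
    rintro m _ ⟨x, _, rfl⟩
    exact fsup m x
  have hPT : ∀ m i, 1 ≤ i → i + 1 ≤ m → ∀ v ∈ P m, Tg (compDescents α) i v ∈ P m := by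
    rintro m i h1 h2 _ ⟨x, hx, rfl⟩
    exact ⟨_, hW.1 m i h1 h2 x hx, fT m i h1 h2 x⟩
  have hPφ : ∀ m, P m ≤ P (m + 1) := by
    rintro m _ ⟨x, hx, rfl⟩
    exact ⟨_, hW.2 m x hx, fφ m x⟩
  have hfr : ∀ m, Module.finrank k (W m) =
      #((powersetCard n (Icc 1 m)).filter (IsLead (fun S : Finset ℕ => toColex S) (P m))) := by
    intro m
    rw [← finrank_lead (fun S : Finset ℕ => toColex S) (fun _ _ h => h) _ (P m) (hPs m)]
    exact LinearEquiv.finrank_eq (Submodule.equivMapOfInjective (f m) (finj m) (W m))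
  refine ⟨{a | IsLead (fun S : Finset ℕ => toColex S) (P (∑ i, a i + n)) (gapSet a)}, ?_, ?_, ?_, ?_⟩
  · apply upclosed_of_step
    intro a ha j
    simp only [Set.mem_ofPred_eq] at ha ⊢
    rw [← gapSet_skip]
    have hs : ∑ i, (a + Pi.single j 1 : Fin (n + 1) → ℕ) i + n = (∑ i, a i + n) + 1 := by
      simp only [Pi.add_apply, Finset.sum_add_distrib]
      simp
      omega
    rw [hs]
    refine lead_skip _ _ _ (fun v hv => ?_) _ ha
    have hle := gapSum_mono a (show (j : ℕ) ≤ n + 1 by omega)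
    rw [gapSum_total] at hle
    exact skip_closed (compDescents α) n _ _ _ (hPs _) (hPφ _) (hPT _) v hv
      ((∑ i, a i + n) + 1 - (gapSum a j + j + 1)) _ (by omega) (by omega)
  · intro D
    rw [hfr, ← gapSet_surj, Finset.filter_image, Finset.card_image_of_injOn]
    · congr 1
      apply filter_congr
      intro a ha
      rw [Finset.Nat.mem_antidiagonalTuple] at ha
      simp only [Set.mem_ofPred_eq, ha]
    · intro a ha b hb h
      simp only [coe_filter, Finset.Nat.mem_antidiagonalTuple, Set.mem_ofPred_eq] at ha hb
      exact gapSet_inj a b (ha.1.trans hb.1.symm) h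
  · intro m
    rw [hfr]
    refine (card_filter_le _ _).trans ?_
    simp
  · intro m hm h0
    have hfd : Module.Finite k (Finsupp.supported k k (okSet n m)) :=
      Module.Finite.equiv (Finsupp.supportedEquivFinsupp (M := k) (R := k)
        (↑(powersetCard n (Icc 1 m)) : Set (Finset ℕ))).symm
    have hfP : Module.Finite k (P m) := Submodule.finiteDimensional_of_le (hPs m)
    have e := Submodule.equivMapOfInjective (f m) (finj m) (W m)
    rw [LinearEquiv.finrank_eq e] at h0
    have hb : P m = ⊥ := Submodule.finrank_eq_zero.1 h0
    apply hm
    exact Submodule.map_injective_of_injective (finj m) (by rw [Submodule.map_bot]; exact hb)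

/-- If `V` is a `ℋ`-submodule of `M(α)`, `|α| = n`, whose first nonzero degree is `d`,
then `dim V_m ≥ C(m - d + n, n)` for all `m ≥ d`; consequently `dim V_m`, which is also
bounded above by `C(m, n)`, is eventually a polynomial of degree `n` in `m` with
leading coefficient `1/n!`. -/
theorem submodule_of_induced_growth (n : ℕ) (α : Composition n)
    (X : HSeq k) (vα : X.V n) (hX : IsInducedModule n α X vα)
    (W : ∀ m, Submodule k (X.V m)) (hW : X.IsSub W)
    (d : ℕ) (hd : W d ≠ ⊥) (hd' : ∀ m < d, W m = ⊥) :
    (∀ m, d ≤ m →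
      (m - d + n).choose n ≤ Module.finrank k (W m) ∧
      Module.finrank k (W m) ≤ m.choose n) ∧
    ∃ p : Polynomial ℚ, p.natDegree = n ∧
      p.leadingCoeff = 1 / (n.factorial : ℚ) ∧
      ∃ N, ∀ m, N ≤ m →
        (Module.finrank k (W m) : ℚ) = p.eval (m : ℚ) := by
  classical
  obtain ⟨U, hU, hcount, hupper, hne⟩ := growth_main n α X vα hX W hW
  obtain ⟨⟨p, N, hp⟩, hlow⟩ := upperSet_count n U hU
  have hd0 := hne d hd
  have hnd : n ≤ d := by
    by_contra hlt
    have := hupper d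
    rw [Nat.choose_eq_zero_of_lt (by omega)] at this
    omega
  have hb : ∃ b ∈ U, ∑ i, b i = d - n := by
    have h1 := hcount (d - n)
    rw [show d - n + n = d by omega] at h1
    rw [h1] at hd0
    obtain ⟨b, hb⟩ := Finset.card_ne_zero.1 hd0
    rw [Finset.mem_filter, Finset.Nat.mem_antidiagonalTuple] at hb
    exact ⟨b, hb.2, hb.1⟩
  obtain ⟨b, hbU, hbs⟩ := hb
  have main : ∀ m, d ≤ m → (m - d + n).choose n ≤ Module.finrank k (W m) ∧
      Module.finrank k (W m) ≤ m.choose n := by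
    intro m hm
    refine ⟨?_, hupper m⟩
    have h1 := hcount (m - n)
    have h2 := hlow b hbU (m - n) (by omega)
    rw [show m - n + n = m by omega] at h1
    rw [hbs, show m - n - (d - n) = m - d by omega] at h2
    rw [h1]
    convert h2
  refine ⟨main, ?_⟩
  have hev : ∀ m, N + n ≤ m → (Module.finrank k (W m) : ℚ)
      = (p.comp (Polynomial.X - Polynomial.C (n : ℚ))).eval (m : ℚ) := by
    intro m hm
    have h1 := hcount (m - n)
    rw [show m - n + n = m by omega] at h1
    have h2 := hp (m - n) (by omega)
    rw [Nat.cast_sub (by omega)] at h2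
    rw [Polynomial.eval_comp, Polynomial.eval_sub, Polynomial.eval_X, Polynomial.eval_C, ← h2, h1]
  have hsq := poly_squeeze n d _ (N + n)
    (fun m h1 h2 => by rw [← hev m h1]; exact_mod_cast (main m h2).1)
    (fun m h1 h2 => by rw [← hev m h1]; exact_mod_cast (main m h2).2)
  exact ⟨_, hsq.1, hsq.2, N + n, hev⟩
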